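/- Let Z : LC(ℝ) → ℝ be a simple, τ-upper semicontinuous, translation invariant and dually epi-translation invariant valuation that vanishes on indicator functions of closed intervals, let m > 0, q(x) = x²/2, and define ζ(a) = Z(a·q + I_{[-m,m]})/(2m) for a > 0. Then ζ extends to an element of Conc; in particular limsup_{a→0⁺} ζ(a) ≤ 0 (and hence ζ(a) → 0 as a → 0⁺) and ζ(a)/a → 0 as a → +∞. -/

import Mathlib

open MeasureTheory Filter Topology Pointwise Asymptotics

noncomputable section

variable {E : Type*} [NormedAddCommGroup E] [NormedSpace ℝ E]

/-- The effective domain of an extended-real-valued function. -/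
def edom (u : E → EReal) : Set E := {x | u x < ⊤}

/-- `u` has Lipschitz constant `L` on the interior of its domain. -/
def LipBound (u : E → EReal) (L : ℝ) : Prop :=
  ∀ x ∈ interior (edom u), ∀ y ∈ interior (edom u),
    |(u x).toReal - (u y).toReal| ≤ L * ‖x - y‖

/-- Membership in `LC`: proper, lower semicontinuous, convex, compact domain,
Lipschitz on the interior of the domain. -/
def IsLC (u : E → EReal) : Prop :=
  (∀ x y : E, ∀ t : ℝ, 0 < t → t < 1 →
      u (t • x + (1 - t) • y) ≤ (t : EReal) * u x + ((1 - t : ℝ) : EReal) * u y) ∧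
  LowerSemicontinuous u ∧
  (∀ x, u x ≠ ⊥) ∧
  (∃ x, u x ≠ ⊤) ∧
  IsCompact (edom u) ∧
  (∃ L : ℝ, 0 < L ∧ LipBound u L)

/-- τ-convergence: epi-convergence together with uniformly bounded Lipschitz constants. -/
def TauConv (uk : ℕ → E → EReal) (u : E → EReal) : Prop :=
  (∀ k, IsLC (uk k)) ∧ IsLC u ∧
  (∀ (x : E) (xk : ℕ → E), Tendsto xk atTop (𝓝 x) →
      u x ≤ liminf (fun k => uk k (xk k)) atTop) ∧
  (∀ x : E, ∃ xk : ℕ → E, Tendsto xk atTop (𝓝 x) ∧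
      Tendsto (fun k => uk k (xk k)) atTop (𝓝 (u x))) ∧
  (∃ M : ℝ, 0 < M ∧ ∀ k, LipBound (uk k) M)

/-- Valuation property on `LC`. -/
def IsVal (Z : (E → EReal) → ℝ) : Prop :=
  ∀ u v : E → EReal, IsLC u → IsLC v → IsLC (fun x => min (u x) (v x)) →
    Z (fun x => min (u x) (v x)) + Z (fun x => max (u x) (v x)) = Z u + Z v

/-- τ-upper semicontinuity. -/
def TauUSC (Z : (E → EReal) → ℝ) : Prop :=
  ∀ (uk : ℕ → E → EReal) (u : E → EReal), TauConv uk u →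
    limsup (fun k => Z (uk k)) atTop ≤ Z u

/-- τ-continuity. -/
def TauCont (Z : (E → EReal) → ℝ) : Prop :=
  ∀ (uk : ℕ → E → EReal) (u : E → EReal), TauConv uk u →
    Tendsto (fun k => Z (uk k)) atTop (𝓝 (Z u))

/-- Translation invariance. -/
def TransInv (Z : (E → EReal) → ℝ) : Prop :=
  ∀ u : E → EReal, IsLC u → ∀ y : E, Z (fun x => u (x - y)) = Z u

/-- Dual epi-translation invariance. -/
def DualTransInv (Z : (E → EReal) → ℝ) : Prop :=
  ∀ u : E → EReal, IsLC u → ∀ (l : E →ₗ[ℝ] ℝ) (c : ℝ),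
    Z (fun x => u x + ((l x + c : ℝ) : EReal)) = Z u

/-- SL_n invariance. -/
def SLInv (Z : (E → EReal) → ℝ) : Prop :=
  ∀ u : E → EReal, IsLC u → ∀ φ : E →ₗ[ℝ] E, LinearMap.det φ = 1 →
    Z (fun x => u (φ x)) = Z u

/-- The class `Conc`. -/
def IsConc (ζ : ℝ → ℝ) : Prop :=
  (∀ t ∈ Set.Ici (0 : ℝ), 0 ≤ ζ t) ∧ ConcaveOn ℝ (Set.Ici 0) ζ ∧
  Tendsto ζ (𝓝[>] 0) (𝓝 0) ∧
  Tendsto (fun t => ζ t / t) atTop (𝓝 0)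

open Classical in
/-- `(∞-valued) indicator function` of a set. -/
noncomputable def eIndicator (K : Set E) : E → EReal := fun x =>
  if x ∈ K then (0 : EReal) else ⊤

/-- Real part of an extended-real-valued function. -/
def toRealFn (u : E → EReal) : E → ℝ := fun x => (u x).toReal

open Classical in
/-- Second derivative of `u`, set to `0` where `u` is not twice differentiable. -/
noncomputable def secondDeriv (u : ℝ → EReal) : ℝ → ℝ := fun x =>
  if DifferentiableAt ℝ (toRealFn u) x ∧ DifferentiableAt ℝ (deriv (toRealFn u)) x
  then deriv (deriv (toRealFn u)) x
  else 0

/-- The function `ζ(a) = Z(a·q + I_{[-m,m]})/(2m)`, where `q(x) = x²/2`. -/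
noncomputable def zetaOf (Z : (ℝ → EReal) → ℝ) (m : ℝ) : ℝ → ℝ := fun a =>
  Z (fun x => ((a * (x ^ 2 / 2) : ℝ) : EReal) + eIndicator (Set.Icc (-m) m) x) / (2 * m)

open Classical in
/-- Restriction of a real function to an interval, `+∞` outside. -/
noncomputable def RR (f : ℝ → ℝ) (s t : ℝ) : ℝ → EReal := fun x =>
  if x ∈ Set.Icc s t then ((f x : ℝ) : EReal) else ⊤

/-- Convex and Lipschitz on an interval. -/
def Good (f : ℝ → ℝ) (s t L : ℝ) : Prop :=
  0 < L ∧ ConvexOn ℝ (Set.Icc s t) f ∧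
    ∀ x ∈ Set.Icc s t, ∀ y ∈ Set.Icc s t, |f x - f y| ≤ L * |x - y|

theorem RR_mem {f : ℝ → ℝ} {s t x : ℝ} (h : x ∈ Set.Icc s t) : RR f s t x = (f x : EReal) := by
  unfold RR; rw [if_pos h]

theorem RR_not {f : ℝ → ℝ} {s t x : ℝ} (h : x ∉ Set.Icc s t) : RR f s t x = ⊤ := by
  unfold RR; rw [if_neg h]

theorem RR_congr {f g : ℝ → ℝ} {s t : ℝ} (h : ∀ x ∈ Set.Icc s t, f x = g x) :
    RR f s t = RR g s t := by
  funext x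
  by_cases hx : x ∈ Set.Icc s t
  · rw [RR_mem hx, RR_mem hx, h x hx]
  · rw [RR_not hx, RR_not hx]

theorem edom_RR (f : ℝ → ℝ) (s t : ℝ) : edom (RR f s t) = Set.Icc s t := by
  ext x
  by_cases hx : x ∈ Set.Icc s t
  · simp only [edom, Set.mem_ofPred_eq, RR_mem hx, hx, iff_true]
    exact EReal.coe_lt_top _
  · simp [edom, RR_not hx, hx]

theorem Good.mono {f : ℝ → ℝ} {s t L s' t' : ℝ} (h : Good f s t L) (h1 : s ≤ s') (h2 : t' ≤ t) :
    Good f s' t' L := by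
  have hs : Set.Icc s' t' ⊆ Set.Icc s t := Set.Icc_subset_Icc h1 h2
  exact ⟨h.1, h.2.1.subset hs (convex_Icc _ _), fun x hx y hy => h.2.2 x (hs hx) y (hs hy)⟩

theorem Good.lip {f : ℝ → ℝ} {s t L : ℝ} (h : Good f s t L) : LipBound (RR f s t) L := by
  intro x hx y hy
  rw [edom_RR] at hx hy
  have hx := interior_subset hx
  have hy := interior_subset hy
  rw [RR_mem hx, RR_mem hy]
  exact h.2.2 x hx y hy

theorem Good.isLC {f : ℝ → ℝ} {s t L : ℝ} (h : Good f s t L) (hst : s ≤ t) :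
    IsLC (RR f s t) := by
  refine ⟨?_, ?_, ?_, ?_, ?_, L, h.1, h.lip⟩
  · intro x y r hr0 hr1
    have hnb : ∀ (z : ℝ) (r : ℝ), 0 < r → (r : EReal) * RR f s t z ≠ ⊥ := by
      intro z r hr
      by_cases hz : z ∈ Set.Icc s t
      · rw [RR_mem hz, ← EReal.coe_mul]; exact EReal.coe_ne_bot _
      · rw [RR_not hz, EReal.coe_mul_top_of_pos hr]; simp
    by_cases hx : x ∈ Set.Icc s t
    · by_cases hy : y ∈ Set.Icc s t
      · have hz : r • x + (1 - r) • y ∈ Set.Icc s t :=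
          convex_Icc s t hx hy hr0.le (by linarith) (by ring)
        rw [RR_mem hx, RR_mem hy, RR_mem hz, ← EReal.coe_mul, ← EReal.coe_mul, ← EReal.coe_add,
          EReal.coe_le_coe_iff]
        exact h.2.1.2 hx hy hr0.le (by linarith) (by ring)
      · have h1 : (((1 - r : ℝ)) : EReal) * RR f s t y = ⊤ := by
          rw [RR_not hy, EReal.coe_mul_top_of_pos (by linarith)]
        rw [h1, EReal.add_top_of_ne_bot (hnb x r hr0)]
        exact le_top
    · have h1 : (r : EReal) * RR f s t x = ⊤ := by
        rw [RR_not hx, EReal.coe_mul_top_of_pos hr0]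
      rw [h1, EReal.top_add_of_ne_bot (hnb y (1 - r) (by linarith))]
      exact le_top
  · intro x y hy
    by_cases hx : x ∈ Set.Icc s t
    · rw [RR_mem hx] at hy
      have hc : ContinuousOn f (Set.Icc s t) := by
        have : LipschitzOnWith (Real.toNNReal L) f (Set.Icc s t) := by
          apply LipschitzOnWith.of_dist_le_mul
          intro x hx y hy
          rw [Real.coe_toNNReal _ h.1.le, Real.dist_eq, Real.dist_eq]
          exact h.2.2 x hx y hy
        exact this.continuousOn
      have hc2 : ContinuousWithinAt (fun z => ((f z : ℝ) : EReal)) (Set.Icc s t) x :=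
        (continuous_coe_real_ereal.continuousAt).comp_continuousWithinAt (hc x hx)
      have h3 := hc2.eventually (lt_mem_nhds hy)
      rw [eventually_nhdsWithin_iff] at h3
      filter_upwards [h3] with z hz
      by_cases hzz : z ∈ Set.Icc s t
      · rw [RR_mem hzz]; exact hz hzz
      · rw [RR_not hzz]; exact hy.trans (EReal.coe_lt_top _)
    · rw [RR_not hx] at hy
      filter_upwards [isClosed_Icc.isOpen_compl.mem_nhds hx] with z hz
      rw [RR_not hz]; exact hy
  · intro x
    by_cases hx : x ∈ Set.Icc s t
    · rw [RR_mem hx]; exact EReal.coe_ne_bot _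
    · rw [RR_not hx]; simp
  · refine ⟨s, ?_⟩
    rw [RR_mem (Set.left_mem_Icc.2 hst)]; exact EReal.coe_ne_top _
  · rw [edom_RR]; exact isCompact_Icc

theorem split_Z {Z : (ℝ → EReal) → ℝ} (hval : IsVal Z)
    (hsimple : ∀ u : ℝ → EReal, IsLC u → (∃ x : ℝ, edom u = {x}) → Z u = 0)
    {f : ℝ → ℝ} {s c t L : ℝ} (h : Good f s t L) (h1 : s ≤ c) (h2 : c ≤ t) :
    Z (RR f s t) = Z (RR f s c) + Z (RR f c t) := by
  have hmin : (fun x => min (RR f s c x) (RR f c t x)) = RR f s t := by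
    funext x
    unfold RR
    by_cases a1 : s ≤ x <;> by_cases a2 : x ≤ c <;> by_cases a3 : c ≤ x <;>
      by_cases a4 : x ≤ t <;> simp [a1, a2, a3, a4] <;> exfalso <;> linarith
  have hmax : (fun x => max (RR f s c x) (RR f c t x)) = RR f c c := by
    funext x
    unfold RR
    simp only [Set.mem_Icc]
    by_cases a1 : s ≤ x <;> by_cases a2 : x ≤ c <;> by_cases a3 : c ≤ x <;>
      by_cases a4 : x ≤ t <;>
      simp only [a1, a2, a3, a4, and_self, and_true, and_false, if_true,
        if_false, max_self, le_top, max_eq_left, max_eq_right] <;> exfalso <;> linarith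
  have := hval (RR f s c) (RR f c t) ((h.mono le_rfl h2).isLC h1) ((h.mono h1 le_rfl).isLC h2)
    (by rw [hmin]; exact h.isLC (h1.trans h2))
  rw [hmin, hmax, hsimple (RR f c c) ((h.mono h1 h2).isLC le_rfl)
    ⟨c, by rw [edom_RR, Set.Icc_self]⟩] at this
  linarith

theorem tau_RR {f : ℕ → ℝ → ℝ} {g : ℝ → ℝ} {s t L : ℝ} (hst : s ≤ t)
    (hf : ∀ k, Good (f k) s t L) (hg : Good g s t L) {e : ℕ → ℝ} (he : Tendsto e atTop (𝓝 0))
    (hfg : ∀ k, ∀ x ∈ Set.Icc s t, |f k x - g x| ≤ e k) :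
    TauConv (fun k => RR (f k) s t) (RR g s t) := by
  refine ⟨fun k => (hf k).isLC hst, hg.isLC hst, ?_, ?_, L, hg.1, fun k => (hf k).lip⟩
  · intro x xk hxk
    by_cases hx : x ∈ Set.Icc s t
    · rw [RR_mem hx]
      have h1 : Tendsto (fun k => ((g x - L * |xk k - x| - e k : ℝ) : EReal)) atTop
          (𝓝 ((g x : ℝ) : EReal)) := by
        rw [EReal.tendsto_coe]
        have : Tendsto (fun k => g x - L * |xk k - x| - e k) atTop
            (𝓝 (g x - L * |x - x| - 0)) :=
          (tendsto_const_nhds.sub (((hxk.sub_const x).abs).const_mul L)).sub he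
        simpa using this
      rw [← h1.liminf_eq]
      refine liminf_le_liminf (Eventually.of_forall ?_)
      intro k
      by_cases hz : xk k ∈ Set.Icc s t
      · simp only [RR_mem hz]
        rw [EReal.coe_le_coe_iff]
        have h2 := abs_le.1 (hfg k _ hz)
        have h3 := abs_le.1 (hg.2.2 _ hz _ hx)
        linarith [h2.1, h3.1]
      · simp only [RR_not hz]; exact le_top
    · have h1 : ∀ᶠ k in atTop, RR (f k) s t (xk k) = ⊤ := by
        filter_upwards [hxk.eventually (isClosed_Icc.isOpen_compl.mem_nhds hx)] with k hk
        exact RR_not hk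
      have h2 : Tendsto (fun k => RR (f k) s t (xk k)) atTop (𝓝 ⊤) :=
        tendsto_nhds_of_eventually_eq h1
      rw [h2.liminf_eq]; exact le_top
  · intro x
    refine ⟨fun _ => x, tendsto_const_nhds, ?_⟩
    by_cases hx : x ∈ Set.Icc s t
    · simp only [RR_mem hx]
      rw [EReal.tendsto_coe, tendsto_iff_dist_tendsto_zero]
      exact squeeze_zero (fun _ => dist_nonneg) (fun k => hfg k x hx) he
    · simp only [RR_not hx]; exact tendsto_const_nhds

/-- The integral of a monotone function is convex and Lipschitz. -/
theorem good_int {φ : ℝ → ℝ} (hφ : Monotone φ) {s t L : ℝ} (hL : 0 < L)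
    (hb : ∀ x ∈ Set.Icc s t, |φ x| ≤ L) : Good (fun x => ∫ y in (0:ℝ)..x, φ y) s t L := by
  have hi : ∀ a b : ℝ, IntervalIntegrable φ volume a b := fun a b => hφ.intervalIntegrable
  have hd : ∀ a b : ℝ, (∫ y in (0:ℝ)..b, φ y) - (∫ y in (0:ℝ)..a, φ y) = ∫ y in a..b, φ y :=
    fun a b => intervalIntegral.integral_interval_sub_left (hi _ _) (hi _ _)
  have hsup : ∀ z x : ℝ, φ z * (x - z) ≤ ∫ y in z..x, φ y := by
    intro z x
    rcases le_total z x with h | h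
    · have := intervalIntegral.integral_mono_on h (intervalIntegrable_const (c := φ z)
        (μ := volume)) (hi z x) (fun y hy => hφ hy.1)
      rw [intervalIntegral.integral_const, smul_eq_mul] at this
      linarith
    · have := intervalIntegral.integral_mono_on h (hi x z) (intervalIntegrable_const (c := φ z)
        (μ := volume)) (fun y hy => hφ hy.2)
      rw [intervalIntegral.integral_const, smul_eq_mul] at this
      rw [intervalIntegral.integral_symm]
      linarith
  refine ⟨hL, ⟨convex_Icc _ _, ?_⟩, ?_⟩
  · intro x hx y hy a b ha hb hab
    simp only [smul_eq_mul]
    have h1 := hsup (a * x + b * y) x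
    have h2 := hsup (a * x + b * y) y
    rw [← hd] at h1 h2
    have h3 := mul_le_mul_of_nonneg_left h1 ha
    have h4 := mul_le_mul_of_nonneg_left h2 hb
    have hb' : b = 1 - a := by linarith
    subst hb'
    nlinarith
  · intro x hx y hy
    show |(∫ y in (0:ℝ)..x, φ y) - (∫ y in (0:ℝ)..y, φ y)| ≤ _
    rw [hd]
    have := intervalIntegral.norm_integral_le_of_norm_le_const (a := y) (b := x) (f := φ) (C := L)
      (by
        intro z hz
        rw [Real.norm_eq_abs]
        apply hb
        have h2 := Set.uIoc_subset_uIcc hz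
        exact Set.uIcc_subset_Icc hy hx h2)
    simpa using this

theorem good_quad (a α β : ℝ) (ha : 0 ≤ a) (s t : ℝ) :
    ∃ L, Good (fun x => a * (x ^ 2 / 2) + α * x + β) s t L := by
  refine ⟨a * (|s| + |t|) + |α| + 1, by positivity, ⟨convex_Icc _ _, ?_⟩, ?_⟩
  · intro x hx y hy p q hp hq hpq
    simp only [smul_eq_mul]
    have hb' : q = 1 - p := by linarith
    subst hb'
    have : 0 ≤ a * (p * (1 - p) * (x - y) ^ 2) := by positivity
    nlinarith
  · intro x hx y hy
    have e : a * (x ^ 2 / 2) + α * x + β - (a * (y ^ 2 / 2) + α * y + β)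
        = (a * ((x + y) / 2) + α) * (x - y) := by ring
    simp only [e, abs_mul]
    gcongr
    have hx' : |x| ≤ |s| + |t| := by
      rw [abs_le]
      constructor
      · linarith [hx.1, neg_abs_le s, abs_nonneg t]
      · linarith [hx.2, le_abs_self t, abs_nonneg s]
    have hy' : |y| ≤ |s| + |t| := by
      rw [abs_le]
      constructor
      · linarith [hy.1, neg_abs_le s, abs_nonneg t]
      · linarith [hy.2, le_abs_self t, abs_nonneg s]
    have h1 : |(x + y) / 2| ≤ |s| + |t| := by
      rw [abs_div, abs_two]
      linarith [abs_add_le x y]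
    have h2 := abs_add_le (a * ((x + y) / 2)) α
    rw [abs_mul, abs_of_nonneg ha] at h2
    have h3 := mul_le_mul_of_nonneg_left h1 ha
    linarith

/-- The value on a quadratic over an interval of length `l`. -/
def GG (Z : (ℝ → EReal) → ℝ) (a l : ℝ) : ℝ := Z (RR (fun x => a * (x ^ 2 / 2)) 0 l)

theorem good_q (a : ℝ) (ha : 0 ≤ a) (s t : ℝ) : ∃ L, Good (fun x => a * (x ^ 2 / 2)) s t L := by
  obtain ⟨L, hL⟩ := good_quad a 0 0 ha s t
  exact ⟨L, by simpa using hL⟩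

theorem Z_quad {Z : (ℝ → EReal) → ℝ} (htrans : TransInv Z) (hdual : DualTransInv Z)
    {f : ℝ → ℝ} {a α β s t : ℝ} (ha : 0 ≤ a) (hst : s ≤ t)
    (hf : ∀ x ∈ Set.Icc s t, f x = a * (x ^ 2 / 2) + α * x + β) :
    Z (RR f s t) = GG Z a (t - s) := by
  obtain ⟨L, hL⟩ := good_q a ha 0 (t - s)
  have h1 := htrans _ (hL.isLC (by linarith)) s
  obtain ⟨L', hL'⟩ := good_quad a (-a * s) (a * s ^ 2 / 2) ha s t
  have e1 : (fun x => RR (fun x => a * (x ^ 2 / 2)) 0 (t - s) (x - s))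
      = RR (fun x => a * (x ^ 2 / 2) + (-a * s) * x + a * s ^ 2 / 2) s t := by
    funext x
    by_cases hx : x ∈ Set.Icc s t
    · rw [RR_mem hx, RR_mem ⟨by linarith [hx.1], by linarith [hx.2]⟩]
      congr 1; ring
    · rw [RR_not hx, RR_not]
      intro h; exact hx ⟨by linarith [h.1], by linarith [h.2]⟩
  rw [e1] at h1
  have h2 := hdual _ (hL'.isLC hst) ((a * s + α) • LinearMap.id) (β - a * s ^ 2 / 2)
  have e2 : (fun x => RR (fun x => a * (x ^ 2 / 2) + (-a * s) * x + a * s ^ 2 / 2) s t x +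
      ((((a * s + α) • LinearMap.id : ℝ →ₗ[ℝ] ℝ) x + (β - a * s ^ 2 / 2) : ℝ) : EReal))
      = RR f s t := by
    funext x
    by_cases hx : x ∈ Set.Icc s t
    · rw [RR_mem hx, RR_mem hx, ← EReal.coe_add, hf x hx]
      congr 1; simp; ring
    · rw [RR_not hx, RR_not hx, EReal.top_add_of_ne_bot (EReal.coe_ne_bot _)]
  rw [e2, h1] at h2
  exact h2

theorem F_quad {φ : ℝ → ℝ} (hφ : Monotone φ) {s t α β : ℝ}
    (h : ∀ y ∈ Set.Ioo s t, φ y = α * y + β) :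
    ∀ x ∈ Set.Icc s t, (∫ y in (0:ℝ)..x, φ y) = α * (x ^ 2 / 2) + β * x +
      ((∫ y in (0:ℝ)..s, φ y) - α * (s ^ 2 / 2) - β * s) := by
  intro x hx
  have hi : ∀ a b : ℝ, IntervalIntegrable φ volume a b := fun a b => hφ.intervalIntegrable
  have hd : (∫ y in (0:ℝ)..x, φ y) - (∫ y in (0:ℝ)..s, φ y) = ∫ y in s..x, φ y :=
    intervalIntegral.integral_interval_sub_left (hi _ _) (hi _ _)
  have h1 : (∫ y in s..x, φ y) = ∫ y in s..x, (α * y + β) := by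
    rw [intervalIntegral.integral_of_le hx.1, intervalIntegral.integral_of_le hx.1,
      MeasureTheory.integral_Ioc_eq_integral_Ioo, MeasureTheory.integral_Ioc_eq_integral_Ioo]
    apply MeasureTheory.setIntegral_congr_fun measurableSet_Ioo
    intro y hy
    exact h y ⟨hy.1, hy.2.trans_le hx.2⟩
  have h2 : (∫ y in s..x, (α * y + β)) = α * (x ^ 2 / 2) + β * x - α * (s ^ 2 / 2) - β * s := by
    rw [intervalIntegral.integral_add (by apply Continuous.intervalIntegrable; fun_prop)
      (by apply Continuous.intervalIntegrable; fun_prop), intervalIntegral.integral_const_mul,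
      integral_id, intervalIntegral.integral_const, smul_eq_mul]
    ring
  linarith

/-- profile of the slope within a cell -/
def om (a b p r : ℝ) : ℝ := if r < p then a * r else a * p + b * (r - p)

theorem om_mono {a b p : ℝ} (ha : 0 ≤ a) (hb : 0 ≤ b) : Monotone (om a b p) := by
  intro x y hxy
  unfold om
  split_ifs with h1 h2 h2
  · exact mul_le_mul_of_nonneg_left hxy ha
  · have := mul_le_mul_of_nonneg_left h1.le ha
    have := mul_nonneg hb (sub_nonneg.2 (not_lt.1 h2))
    linarith
  · exact absurd (hxy.trans_lt h2) h1
  · have := mul_le_mul_of_nonneg_left hxy hb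
    linarith

theorem om_bd {a b p c r : ℝ} (ha : 0 ≤ a) (hb : 0 ≤ b) (hp0 : 0 < p)
    (hc : a * p + b * (1 - p) ≤ c) (hp1 : p < 1) (hr : 0 ≤ r) (hr1 : r ≤ 1) :
    0 ≤ om a b p r ∧ om a b p r ≤ c := by
  have h0 : om a b p 0 = 0 := by simp [om, hp0]
  have h1 : om a b p 1 = a * p + b * (1 - p) := by simp [om, not_lt.2 hp1.le]
  have h2 := om_mono (p := p) ha hb hr
  have h3 := om_mono (p := p) ha hb hr1
  constructor <;> linarith

/-- the approximating slopes -/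
def ph (a b p c h x : ℝ) : ℝ := h * (c * (⌊x / h⌋ : ℝ) + om a b p (Int.fract (x / h)))

theorem ph_mono {a b p c h : ℝ} (ha : 0 ≤ a) (hb : 0 ≤ b) (hp0 : 0 < p)
    (hc : a * p + b * (1 - p) ≤ c) (hp1 : p < 1) (hh : 0 < h) : Monotone (ph a b p c h) := by
  intro x y hxy
  unfold ph
  refine mul_le_mul_of_nonneg_left ?_ hh.le
  have hxy' : x / h ≤ y / h := div_le_div_of_nonneg_right hxy hh.le
  have h1 := om_bd ha hb hp0 hc hp1 (Int.fract_nonneg (x / h)) (Int.fract_lt_one (x / h)).le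
  have h2 := om_bd ha hb hp0 hc hp1 (Int.fract_nonneg (y / h)) (Int.fract_lt_one (y / h)).le
  rcases (Int.floor_mono hxy').lt_or_eq with hlt | heq
  · have h3 : ((⌊x / h⌋ : ℝ)) + 1 ≤ (⌊y / h⌋ : ℝ) := by exact_mod_cast hlt
    have hc0 : 0 ≤ c := h1.1.trans h1.2
    have := mul_le_mul_of_nonneg_left h3 hc0
    linarith [h1.2, h2.1]
  · rw [heq]
    have : Int.fract (x / h) ≤ Int.fract (y / h) := by
      unfold Int.fract; rw [heq]; linarith
    linarith [om_mono (p := p) ha hb this]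

theorem ph_close {a b p c h : ℝ} (ha : 0 ≤ a) (hb : 0 ≤ b) (hp0 : 0 < p)
    (hc : a * p + b * (1 - p) ≤ c) (hp1 : p < 1) (hh : 0 < h) (x : ℝ) :
    |ph a b p c h x - c * x| ≤ c * h := by
  have h1 := om_bd ha hb hp0 hc hp1 (Int.fract_nonneg (x / h)) (Int.fract_lt_one (x / h)).le
  have hc0 : 0 ≤ c := h1.1.trans h1.2
  have e : ph a b p c h x - c * x
      = h * (om a b p (Int.fract (x / h)) - c * Int.fract (x / h)) := by
    have hx : x = h * ((⌊x / h⌋ : ℝ) + Int.fract (x / h)) := by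
      rw [Int.floor_add_fract]; field_simp
    conv_lhs => rw [hx]
    unfold ph
    rw [Int.floor_add_fract, mul_div_cancel_left₀ _ hh.ne']
    conv_lhs => 
      rw [mul_add, mul_left_comm c h]
    have := Int.floor_add_fract (x / h)
    linear_combination (h * c) * this
  rw [e, abs_mul, abs_of_pos hh, mul_comm c h]
  refine mul_le_mul_of_nonneg_left ?_ hh.le
  have h4 : 0 ≤ c * Int.fract (x / h) := mul_nonneg hc0 (Int.fract_nonneg _)
  have h5 : c * Int.fract (x / h) ≤ c * 1 :=
    mul_le_mul_of_nonneg_left (Int.fract_lt_one _).le hc0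
  rw [abs_le]; constructor <;> linarith [h1.1, h1.2]

theorem ph_good {a b p c h : ℝ} (ha : 0 ≤ a) (hb : 0 ≤ b) (hp0 : 0 < p)
    (hc : a * p + b * (1 - p) ≤ c) (hp1 : p < 1) (hh : 0 < h) {l L : ℝ}
    (hL : c * (l + h) < L) (hl : 0 ≤ l) :
    Good (fun x => ∫ y in (0:ℝ)..x, ph a b p c h y) 0 l L := by
  have h1 := om_bd ha hb hp0 hc hp1 le_rfl zero_le_one
  have hc0 : 0 ≤ c := h1.1.trans h1.2
  have hL0 : 0 ≤ c * (l + h) := by positivity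
  refine good_int (ph_mono ha hb hp0 hc hp1 hh) (by linarith) ?_
  intro x hx
  have h2 := abs_le.1 (ph_close ha hb hp0 hc hp1 hh x)
  have h3 := mul_le_mul_of_nonneg_left hx.2 hc0
  have h4 := mul_nonneg hc0 hx.1
  rw [abs_le]; constructor <;> nlinarith [h2.1, h2.2]

theorem ph_cell1 {a b p c h : ℝ} (hp1 : p < 1) (hh : 0 < h) (n : ℕ) :
    ∀ y ∈ Set.Ioo (n * h) ((n + p) * h), ph a b p c h y = a * y + (c - a) * n * h := by
  intro y hy
  have h1 : (n : ℝ) < y / h := by rw [lt_div_iff₀ hh]; exact hy.1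
  have h2 : y / h < n + p := by rw [div_lt_iff₀ hh]; exact hy.2
  have hf : ⌊y / h⌋ = (n : ℤ) := by
    rw [Int.floor_eq_iff]; push_cast; constructor <;> linarith
  unfold ph om Int.fract
  rw [hf]
  push_cast
  rw [if_pos (by linarith)]
  field_simp
  ring

theorem ph_cell2 {a b p c h : ℝ} (hp0 : 0 < p) (hh : 0 < h) (n : ℕ) :
    ∀ y ∈ Set.Ioo ((n + p) * h) ((n + 1) * h), ph a b p c h y =
      b * y + (c * n * h + a * p * h - b * (n + p) * h) := by
  intro y hy
  have h1 : (n : ℝ) + p < y / h := by rw [lt_div_iff₀ hh]; exact hy.1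
  have h2 : y / h < n + 1 := by rw [div_lt_iff₀ hh]; exact hy.2
  have hf : ⌊y / h⌋ = (n : ℤ) := by
    rw [Int.floor_eq_iff]; push_cast; constructor <;> linarith
  unfold ph om Int.fract
  rw [hf]
  push_cast
  rw [if_neg (by linarith)]
  field_simp
  ring

theorem Z_cells {Z : (ℝ → EReal) → ℝ} (hval : IsVal Z) (htrans : TransInv Z)
    (hdual : DualTransInv Z)
    (hsimple : ∀ u : ℝ → EReal, IsLC u → (∃ x : ℝ, edom u = {x}) → Z u = 0)
    {a b p c h : ℝ} (ha : 0 ≤ a) (hb : 0 ≤ b) (hp0 : 0 < p)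
    (hc : a * p + b * (1 - p) ≤ c) (hp1 : p < 1) (hh : 0 < h) (n : ℕ) :
    Z (RR (fun x => ∫ y in (0:ℝ)..x, ph a b p c h y) 0 (n * h))
      = n * (GG Z a (p * h) + GG Z b ((1 - p) * h)) := by
  have hm := ph_mono ha hb hp0 hc hp1 hh
  have good : ∀ n : ℕ, ∃ L, Good (fun x => ∫ y in (0:ℝ)..x, ph a b p c h y) 0 (n * h) L :=
    fun n => ⟨_, ph_good ha hb hp0 hc hp1 hh (lt_add_one _) (by positivity)⟩
  induction n with
  | zero =>
    obtain ⟨L, hL⟩ := good 0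
    simp only [Nat.cast_zero, zero_mul] at hL ⊢
    exact hsimple _ (hL.isLC le_rfl) ⟨0, by rw [edom_RR, Set.Icc_self]⟩
  | succ n ih =>
    obtain ⟨L, hL⟩ := good (n + 1)
    push_cast at hL ⊢
    have hph : 0 < p * h := by positivity
    have hph1 : 0 < (1 - p) * h := mul_pos (by linarith) hh
    have hnh : 0 ≤ n * h := by positivity
    have i1 : n * h ≤ (n + p) * h := by nlinarith
    have i2 : (n + p) * h ≤ (n + 1) * h := by nlinarith
    rw [split_Z hval hsimple hL hnh (i1.trans i2), ih,
      split_Z hval hsimple (hL.mono hnh le_rfl) i1 i2,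
      Z_quad htrans hdual ha i1 (F_quad hm (ph_cell1 hp1 hh n)),
      Z_quad htrans hdual hb i2 (F_quad hm (ph_cell2 hp0 hh n))]
    have e1 : (n + p) * h - n * h = p * h := by ring
    have e2 : (n + 1) * h - (n + p) * h = (1 - p) * h := by ring
    rw [e1, e2]; ring

theorem key {Z : (ℝ → EReal) → ℝ} (hval : IsVal Z) (husc : TauUSC Z) (htrans : TransInv Z)
    (hdual : DualTransInv Z)
    (hsimple : ∀ u : ℝ → EReal, IsLC u → (∃ x : ℝ, edom u = {x}) → Z u = 0)
    {a b p c l : ℝ} (ha : 0 ≤ a) (hb : 0 ≤ b) (hp0 : 0 < p)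
    (hc : a * p + b * (1 - p) ≤ c) (hp1 : p < 1) (hl : 0 < l) (v : ℝ)
    (hv : ∀ n : ℕ, (n + 1 : ℝ) * (GG Z a (p * (l / (n + 1))) + GG Z b ((1 - p) * (l / (n + 1))))
      = v) : v ≤ GG Z c l := by
  have h1 := om_bd ha hb hp0 hc hp1 le_rfl zero_le_one
  have hc0 : 0 ≤ c := h1.1.trans h1.2
  have hh : ∀ n : ℕ, 0 < l / ((n : ℝ) + 1) := fun n => by positivity
  have hhl : ∀ n : ℕ, l / ((n : ℝ) + 1) ≤ l := fun n => by
    apply div_le_self hl.le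
    have : (0 : ℝ) ≤ n := n.cast_nonneg
    linarith
  obtain ⟨L, hL⟩ := good_q c hc0 0 l
  have hL' : Good (fun x => c * (x ^ 2 / 2)) 0 l (L + (c * (2 * l) + 1)) := by
    refine ⟨by have := hL.1; positivity, hL.2.1, fun x hx y hy => (hL.2.2 x hx y hy).trans ?_⟩
    gcongr
    have : 0 ≤ c * (2 * l) + 1 := by positivity
    linarith
  have ht := tau_RR (f := fun n x => ∫ y in (0:ℝ)..x, ph a b p c (l / ((n : ℝ) + 1)) y)
    (g := fun x => c * (x ^ 2 / 2)) (s := 0) (t := l) (L := L + (c * (2 * l) + 1)) hl.le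
    (fun n => ph_good ha hb hp0 hc hp1 (hh n) (by
      have := mul_le_mul_of_nonneg_left (hhl n) hc0
      have := hL.1
      linarith) hl.le) hL' (e := fun n => c * (l / ((n : ℝ) + 1)) * l)
    (by
      have : Tendsto (fun n : ℕ => c * l * l * (1 / ((n : ℝ) + 1))) atTop (𝓝 (c * l * l * 0)) :=
        tendsto_one_div_add_atTop_nhds_zero_nat.const_mul _
      rw [mul_zero] at this
      refine this.congr fun n => ?_
      ring)
    (by
      intro n x hx
      have hi : ∀ u w : ℝ, IntervalIntegrable (ph a b p c (l / ((n : ℝ) + 1))) volume u w :=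
        fun u w => (ph_mono ha hb hp0 hc hp1 (hh n)).intervalIntegrable
      have e1 : c * (x ^ 2 / 2) = ∫ y in (0:ℝ)..x, c * y := by
        rw [intervalIntegral.integral_const_mul, integral_id]; ring
      simp only [e1]
      rw [← intervalIntegral.integral_sub (hi _ _)
        (by apply Continuous.intervalIntegrable; fun_prop)]
      have := intervalIntegral.norm_integral_le_of_norm_le_const (a := 0) (b := x)
        (f := fun y => ph a b p c (l / ((n : ℝ) + 1)) y - c * y) (C := c * (l / ((n : ℝ) + 1)))
        (fun y _ => ph_close ha hb hp0 hc hp1 (hh n) y)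
      rw [Real.norm_eq_abs, sub_zero, abs_of_nonneg hx.1] at this
      refine this.trans ?_
      exact mul_le_mul_of_nonneg_left hx.2 (mul_nonneg hc0 (hh n).le))
  have h2 := husc _ _ ht
  have h3 : ∀ n : ℕ, Z (RR (fun x => ∫ y in (0:ℝ)..x, ph a b p c (l / ((n : ℝ) + 1)) y) 0 l)
      = v := by
    intro n
    have := Z_cells hval htrans hdual hsimple ha hb hp0 hc hp1 (hh n) (n + 1)
    push_cast at this
    rw [mul_div_cancel₀ l (by positivity : (n : ℝ) + 1 ≠ 0)] at this
    rw [this, hv n]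
  simp only [h3, limsup_const] at h2
  exact h2

theorem additive_linear {g : ℝ → ℝ} (h0 : ∀ x, 0 < x → 0 ≤ g x)
    (hadd : ∀ x y, 0 < x → 0 < y → g (x + y) = g x + g y) :
    ∀ x, 0 < x → g x = x * g 1 := by
  have hmono : ∀ x y, 0 < x → x ≤ y → g x ≤ g y := by
    intro x y hx hxy
    rcases hxy.eq_or_lt with rfl | h
    · exact le_rfl
    · have := hadd x (y - x) hx (by linarith)
      rw [add_sub_cancel] at this
      linarith [h0 (y - x) (by linarith)]
  have hnat : ∀ (n : ℕ) x, 0 < x → g ((n + 1) * x) = (n + 1) * g x := by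
    intro n x hx
    induction n with
    | zero => simp
    | succ n ih =>
      push_cast
      rw [add_mul, one_mul, hadd _ _ (by positivity) hx, ih]; ring
  intro x hx
  have h1 := h0 1 one_pos
  have hb : ∀ n : ℕ, (n + 1 : ℝ) * |g x - x * g 1| ≤ 2 * g 1 := by
    intro n
    have hnx : 0 < (n + 1 : ℝ) * x := by positivity
    set k := ⌊(n + 1 : ℝ) * x⌋₊ with hk
    have hk1 : (k : ℝ) ≤ (n + 1) * x := Nat.floor_le hnx.le
    have hk2 : (n + 1) * x < (k : ℝ) + 1 := Nat.lt_floor_add_one _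
    have u1 : (n + 1) * g x ≤ (k + 1) * g 1 := by
      rw [← hnat n x hx, ← hnat k 1 one_pos]
      apply hmono _ _ hnx
      linarith
    have u2 : k * g 1 ≤ (n + 1) * g x := by
      rw [← hnat n x hx]
      rcases Nat.eq_zero_or_pos k with hz | hz
      · rw [hz]; simpa using h0 _ hnx
      · obtain ⟨j, hj⟩ := Nat.exists_eq_succ_of_ne_zero hz.ne'
        rw [hj] at hk1 ⊢
        push_cast at hk1 ⊢
        rw [← hnat j 1 one_pos]
        apply hmono _ _ (by positivity)
        linarith
    have hn : (0:ℝ) < n + 1 := by positivity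
    rw [← abs_of_pos hn, ← abs_mul, abs_le]
    have m1 := mul_le_mul_of_nonneg_right hk1 h1
    have m2 := mul_le_mul_of_nonneg_right hk2.le h1
    constructor <;> nlinarith
  by_contra hne
  have hpos : 0 < |g x - x * g 1| := abs_pos.2 (sub_ne_zero.2 hne)
  obtain ⟨n, hn⟩ := exists_nat_gt (2 * g 1 / |g x - x * g 1|)
  rw [div_lt_iff₀ hpos] at hn
  have := hb n
  linarith

theorem tau_point {Z : (ℝ → EReal) → ℝ} (husc : TauUSC Z) :
    limsup (fun k : ℕ => GG Z (k + 1) (1 / (k + 1))) atTop ≤ Z (RR (fun _ => 0) 0 0) := by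
  have hgood : ∀ k : ℕ, Good (fun x => ((k : ℝ) + 1) * (x ^ 2 / 2)) 0 (1 / ((k : ℝ) + 1)) 1 := by
    intro k
    have hk : (0 : ℝ) < k + 1 := by positivity
    obtain ⟨L, hL⟩ := good_q ((k : ℝ) + 1) hk.le 0 (1 / ((k : ℝ) + 1))
    refine ⟨one_pos, hL.2.1, ?_⟩
    intro x hx y hy
    have e : ((k : ℝ) + 1) * (x ^ 2 / 2) - ((k : ℝ) + 1) * (y ^ 2 / 2)
      = (((k : ℝ) + 1) * ((x + y) / 2)) * (x - y) := by ring
    rw [e, abs_mul]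
    gcongr
    have hx2 := (le_div_iff₀ hk).1 hx.2
    have hy2 := (le_div_iff₀ hk).1 hy.2
    have hx1 := hx.1
    have hy1 := hy.1
    rw [abs_of_nonneg (by positivity)]
    linarith
  have hg0 : Good (fun _ => (0 : ℝ)) 0 0 1 :=
    ⟨one_pos, convexOn_const 0 (convex_Icc _ _), fun x _ y _ => by simp⟩
  have htop : ∀ (x : ℝ) (xk : ℕ → ℝ), x ≠ 0 → Tendsto xk atTop (𝓝 x) →
      Tendsto (fun k : ℕ => RR (fun x => ((k : ℝ) + 1) * (x ^ 2 / 2)) 0 (1 / ((k : ℝ) + 1)) (xk k))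
        atTop (𝓝 ⊤) := by
    intro x xk hx hxk
    apply tendsto_nhds_of_eventually_eq
    have hl : Tendsto (fun k : ℕ => 1 / ((k : ℝ) + 1)) atTop (𝓝 0) :=
      tendsto_one_div_add_atTop_nhds_zero_nat
    rcases lt_or_gt_of_ne hx with h | h
    · filter_upwards [hxk.eventually (gt_mem_nhds h)] with k hk
      exact RR_not fun hh => absurd hh.1 (not_le.2 hk)
    · filter_upwards [hxk.eventually (lt_mem_nhds (half_lt_self h)),
        hl.eventually (gt_mem_nhds (half_pos h))] with k hk hk2
      exact RR_not fun hh => absurd hh.2 (not_le.2 (hk2.trans hk))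
  apply husc (fun k : ℕ => RR (fun x => ((k : ℝ) + 1) * (x ^ 2 / 2)) 0 (1 / ((k : ℝ) + 1)))
    (RR (fun _ => 0) 0 0)
  refine ⟨fun k => (hgood k).isLC (by positivity), hg0.isLC le_rfl, ?_, ?_, 1, one_pos,
    fun k => (hgood k).lip⟩
  · intro x xk hxk
    by_cases hx : x = 0
    · subst hx
      rw [RR_mem (Set.left_mem_Icc.2 le_rfl)]
      apply le_liminf_of_le
      · isBoundedDefault
      · refine Eventually.of_forall fun k => ?_
        beta_reduce
        by_cases hz : xk k ∈ Set.Icc 0 (1 / ((k : ℝ) + 1))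
        · rw [RR_mem hz, EReal.coe_le_coe_iff]; positivity
        · rw [RR_not hz]; exact le_top
    · rw [(htop x xk hx hxk).liminf_eq]; exact le_top
  · intro x
    refine ⟨fun _ => x, tendsto_const_nhds, ?_⟩
    by_cases hx : x = 0
    · subst hx
      rw [RR_mem (Set.left_mem_Icc.2 le_rfl)]
      refine tendsto_nhds_of_eventually_eq (Eventually.of_forall fun k => ?_)
      beta_reduce
      rw [RR_mem (Set.left_mem_Icc.2 (by positivity))]
      simp
    · have := htop x (fun _ => x) hx tendsto_const_nhds
      rw [RR_not (by simpa using hx)]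
      exact this

theorem tau_zero {Z : (ℝ → EReal) → ℝ} (husc : TauUSC Z) :
    limsup (fun k : ℕ => GG Z (1 / (k + 1)) 1) atTop ≤ GG Z 0 1 := by
  have hgood : ∀ a : ℝ, 0 ≤ a → a ≤ 1 → Good (fun x => a * (x ^ 2 / 2)) 0 1 1 := by
    intro a ha ha1
    obtain ⟨L, hL⟩ := good_q a ha 0 1
    refine ⟨one_pos, hL.2.1, ?_⟩
    intro x hx y hy
    have e : a * (x ^ 2 / 2) - a * (y ^ 2 / 2) = (a * ((x + y) / 2)) * (x - y) := by ring
    rw [e, abs_mul]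
    gcongr
    have hx1 := hx.1
    have hy1 := hy.1
    rw [abs_of_nonneg (by positivity)]
    have : (x + y) / 2 ≤ 1 := by linarith [hx.2, hy.2]
    exact mul_le_one₀ ha1 (by positivity) this
  have ha : ∀ k : ℕ, 0 ≤ 1 / ((k : ℝ) + 1) ∧ 1 / ((k : ℝ) + 1) ≤ 1 := by
    intro k
    refine ⟨by positivity, div_le_self zero_le_one ?_⟩
    have : (0 : ℝ) ≤ k := k.cast_nonneg
    linarith
  apply husc (fun k : ℕ => RR (fun x => (1 / ((k : ℝ) + 1)) * (x ^ 2 / 2)) 0 1)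
  refine tau_RR zero_le_one (fun k => hgood _ (ha k).1 (ha k).2) (hgood 0 le_rfl zero_le_one)
    tendsto_one_div_add_atTop_nhds_zero_nat ?_
  intro k x hx
  have hx1 := hx.1
  have h0 := (ha k).1
  rw [zero_mul, sub_zero, abs_of_nonneg (by positivity)]
  have : x ^ 2 / 2 ≤ 1 := by nlinarith [hx.2]
  exact mul_le_of_le_one_right h0 this

/-- For a simple, τ-upper semicontinuous, translation and dually
epi-translation invariant valuation `Z` on `LC(ℝ)` vanishing on indicators of closed intervals,
the function `ζ(a) = Z(a·q + I_{[-m,m]})/(2m)` (for `a > 0`) extends to an element of `Conc`;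
in particular `limsup_{a→0⁺} ζ(a) ≤ 0` (hence `ζ(a) → 0` as `a → 0⁺`) and `ζ(a)/a → 0` as
`a → +∞`. -/
theorem stmt13 (Z : (ℝ → EReal) → ℝ)
    (hval : IsVal Z) (husc : TauUSC Z) (htrans : TransInv Z) (hdual : DualTransInv Z)
    (hsimple : ∀ u : ℝ → EReal, IsLC u → (∃ x : ℝ, edom u = {x}) → Z u = 0)
    (hvanish : ∀ a b : ℝ, a ≤ b → Z (eIndicator (Set.Icc a b)) = 0)
    (m : ℝ) (hm : 0 < m) :
    (∃ ζ₀ : ℝ → ℝ, IsConc ζ₀ ∧ ∀ a : ℝ, 0 < a → ζ₀ a = zetaOf Z m a) ∧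
    limsup (zetaOf Z m) (𝓝[>] 0) ≤ 0 ∧
    Tendsto (zetaOf Z m) (𝓝[>] 0) (𝓝 0) ∧
    Tendsto (fun a => zetaOf Z m a / a) atTop (𝓝 0) := by
  have hG0 : ∀ l, 0 ≤ l → GG Z 0 l = 0 := by
    intro l hl
    refine Eq.trans ?_ (hvanish 0 l hl)
    unfold GG
    congr 1
    funext x
    by_cases hx : x ∈ Set.Icc 0 l
    · rw [RR_mem hx, eIndicator, if_pos hx]; simp
    · rw [RR_not hx, eIndicator, if_neg hx]
  have hGn : ∀ a, 0 ≤ a → ∀ l, 0 < l → 0 ≤ GG Z a l := by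
    intro a ha l hl
    refine key hval husc htrans hdual hsimple (a := 0) (b := 0) (p := 1 / 2) le_rfl le_rfl
      (by norm_num) (by simpa using ha) (by norm_num) hl 0 ?_
    intro n
    rw [hG0 _ (by positivity), hG0 _ (mul_nonneg (by norm_num) (by positivity))]
    simp
  have hGl : ∀ a, 0 ≤ a → ∀ l, 0 < l → GG Z a l = l * GG Z a 1 := by
    intro a ha
    refine additive_linear (hGn a ha) ?_
    intro x y hx hy
    obtain ⟨L, hL⟩ := good_q a ha 0 (x + y)
    have h1 := split_Z hval hsimple hL hx.le (by linarith)
    rw [Z_quad htrans hdual (s := x) (α := 0) (β := 0) ha (by linarith)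
      (by intro z _; simp), add_sub_cancel_left] at h1
    exact h1
  have hz : ∀ a, 0 ≤ a → zetaOf Z m a = GG Z a 1 := by
    intro a ha
    unfold zetaOf
    have e : (fun x => ((a * (x ^ 2 / 2) : ℝ) : EReal) + eIndicator (Set.Icc (-m) m) x)
        = RR (fun x => a * (x ^ 2 / 2)) (-m) m := by
      funext x
      by_cases hx : x ∈ Set.Icc (-m) m
      · rw [RR_mem hx, eIndicator, if_pos hx, add_zero]
      · rw [RR_not hx, eIndicator, if_neg hx, EReal.add_top_of_ne_bot (EReal.coe_ne_bot _)]
    rw [e, Z_quad htrans hdual (α := 0) (β := 0) ha (by linarith) (by intro z _; simp),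
      hGl a ha _ (by linarith)]
    field_simp
    ring
  set γ : ℝ → ℝ := fun a => GG Z a 1 with hγ
  have hγ0 : γ 0 = 0 := hG0 1 zero_le_one
  have hγn : ∀ a, 0 ≤ a → 0 ≤ γ a := fun a ha => hGn a ha 1 one_pos
  have hγc : ∀ a b p, 0 ≤ a → 0 ≤ b → 0 < p → p < 1 →
      p * γ a + (1 - p) * γ b ≤ γ (p * a + (1 - p) * b) := by
    intro a b p ha hb hp0 hp1
    refine key hval husc htrans hdual hsimple ha hb hp0 (le_of_eq (by ring)) hp1 one_pos _ ?_
    intro n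
    have hn : (0 : ℝ) < n + 1 := by positivity
    have hp2 : 0 < 1 - p := by linarith
    rw [hGl a ha _ (by positivity), hGl b hb _ (by positivity)]
    simp only [hγ]
    field_simp
  have hconc : ConcaveOn ℝ (Set.Ici 0) γ := by
    refine ⟨convex_Ici 0, ?_⟩
    intro x hx y hy p q hp hq hpq
    have hq' : q = 1 - p := by linarith
    subst hq'
    simp only [smul_eq_mul]
    rcases hp.eq_or_lt with rfl | hp
    · simp
    rcases hq.eq_or_lt with h | hq
    · have : p = 1 := by linarith
      subst this; simp
    exact hγc x y p hx hy hp (by linarith)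
  -- the quotient is antitone
  have hanti : ∀ x y, 0 < x → x ≤ y → γ y / y ≤ γ x / x := by
    intro x y hx hxy
    rcases hxy.eq_or_lt with rfl | h
    · exact le_rfl
    have hy : 0 < y := hx.trans h
    have h1 := hγc y 0 (x / y) hy.le le_rfl (by positivity) ((div_lt_one hy).2 h)
    rw [hγ0, mul_zero, add_zero, add_zero, div_mul_cancel₀ _ hy.ne'] at h1
    rw [le_div_iff₀ hx]
    calc γ y / y * x = x / y * γ y := by ring
      _ ≤ γ x := h1
  -- monotone
  have hmono : ∀ x y, 0 < x → x ≤ y → γ x ≤ γ y := by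
    intro x y hx hxy
    by_contra hlt
    push Not at hlt
    have hxy' : x < y := lt_of_le_of_ne hxy (by rintro rfl; exact lt_irrefl _ hlt)
    -- far point
    set d := γ x - γ y with hd
    have hd0 : 0 < d := by linarith
    set T := y + (y - x) * (γ y / d + 1) with hT
    have hyT : 0 < T - y := by
      have := hγn y (by linarith)
      have h2 : 0 < y - x := by linarith
      rw [hT]
      have : 0 < (y - x) * (γ y / d + 1) := by positivity
      linarith
    have hTx : 0 < T - x := by linarith
    have h1 := hγc x T ((T - y) / (T - x)) hx.le (by linarith) (by positivity)
      ((div_lt_one hTx).2 (by linarith))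
    have e1 : 1 - (T - y) / (T - x) = (y - x) / (T - x) := by field_simp; ring
    have e2 : (T - y) / (T - x) * x + (y - x) / (T - x) * T = y := by field_simp; ring
    rw [e1, e2] at h1
    have h2 : 0 ≤ (y - x) / (T - x) * γ T :=
      mul_nonneg (div_nonneg (by linarith) hTx.le) (hγn T (by linarith))
    have h3 : (T - y) / (T - x) * γ x ≤ γ y := by linarith
    rw [div_mul_eq_mul_div, div_le_iff₀ hTx] at h3
    have e3 : (T - y) * d = (y - x) * (γ y + d) := by rw [hT]; field_simp; ring
    nlinarith
  have hlim0 : Tendsto γ (𝓝[>] 0) (𝓝 0) := by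
    have h1 := tau_zero husc
    rw [hG0 1 zero_le_one] at h1
    have hbd : IsBoundedUnder (· ≤ ·) atTop (fun k : ℕ => GG Z (1 / ((k : ℝ) + 1)) 1) := by
      refine ⟨γ 1, eventually_map.2 (Eventually.of_forall fun k => ?_)⟩
      refine hmono _ _ (by positivity) (div_le_self zero_le_one ?_)
      have : (0 : ℝ) ≤ k := k.cast_nonneg
      linarith
    rw [tendsto_order]
    constructor
    · intro e he
      filter_upwards [self_mem_nhdsWithin] with x hx
      exact he.trans_le (hγn x (le_of_lt hx))
    · intro e he
      obtain ⟨k, hk⟩ := (eventually_lt_of_limsup_lt (h1.trans_lt he) hbd).exists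
      have hpos : (0 : ℝ) < 1 / ((k : ℝ) + 1) := by positivity
      filter_upwards [Ioo_mem_nhdsGT hpos] with x hx
      exact (hmono x _ hx.1 hx.2.le).trans_lt hk
  have hlimT : Tendsto (fun a => γ a / a) atTop (𝓝 0) := by
    have h1 := tau_point husc
    have h2 : Z (RR (fun _ => 0) 0 0) = 0 := by
      have := hG0 0 le_rfl
      unfold GG at this
      simpa using this
    rw [h2] at h1
    have e : ∀ k : ℕ, GG Z ((k : ℝ) + 1) (1 / ((k : ℝ) + 1)) = γ (k + 1) / (k + 1) := by
      intro k
      rw [hGl _ (by positivity) _ (by positivity)]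
      simp only [hγ]; ring
    simp only [e] at h1
    have hbd : IsBoundedUnder (· ≤ ·) atTop (fun k : ℕ => γ ((k : ℝ) + 1) / (k + 1)) := by
      refine ⟨γ 1 / 1, eventually_map.2 (Eventually.of_forall fun k => ?_)⟩
      refine hanti _ _ one_pos ?_
      have : (0 : ℝ) ≤ k := k.cast_nonneg
      linarith
    rw [tendsto_order]
    constructor
    · intro e he
      filter_upwards [eventually_gt_atTop 0] with x hx
      exact he.trans_le (div_nonneg (hγn x hx.le) hx.le)
    · intro e he
      obtain ⟨k, hk⟩ := (eventually_lt_of_limsup_lt (h1.trans_lt he) hbd).exists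
      filter_upwards [eventually_ge_atTop ((k : ℝ) + 1)] with x hx
      exact (hanti _ x (by positivity) hx).trans_lt hk
  have hz0 : Tendsto (zetaOf Z m) (𝓝[>] 0) (𝓝 0) := by
    refine hlim0.congr' ?_
    filter_upwards [self_mem_nhdsWithin] with x hx
    exact (hz x (le_of_lt hx)).symm
  refine ⟨⟨γ, ⟨fun t ht => hγn t ht, hconc, hlim0, hlimT⟩, fun a ha => (hz a ha.le).symm⟩,
    hz0.limsup_eq.le, hz0, ?_⟩
  refine hlimT.congr' ?_
  filter_upwards [eventually_gt_atTop 0] with x hx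
  rw [hz x hx.le]

end
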